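/- Let f ∈ ℱ. For every k ≥ 1 and every s ∈ 𝒮_{f,k} there exists a sequence ⟨s_j : 1 ≤ j < ω⟩ ∈ lim(𝒮_f) with s_k = s; in particular lim(𝒮_f) is nonempty. -/

import Mathlib

/-- `η ∈ 𝒯_f` : a finite sequence with `η(ℓ) ≤ f(ℓ)` for all `ℓ < lg(η)`. -/
def inT (f : ℕ → ℕ) (η : List ℕ) : Prop := ∀ i : Fin η.length, η.get i ≤ f i

/-- `𝒯_{f,k}` : elements of `𝒯_f` of length exactly `k`. -/
def Tk (f : ℕ → ℕ) (k : ℕ) : Set (List ℕ) := {η | η.length = k ∧ inT f η}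

/-- `𝒯_{f,[k]}` : elements of `𝒯_f` of length at most `k`. -/
def Tle (f : ℕ → ℕ) (k : ℕ) : Set (List ℕ) := {η | η.length ≤ k ∧ inT f η}

/-- `𝒯_f = ⋃_k 𝒯_{f,k}`. -/
def Tf (f : ℕ → ℕ) : Set (List ℕ) := {η | inT f η}

/-- The conditions on `s ⊆ 𝒯_{f,[k]}` prior to maximality: nonempty, closed
under initial segment, every `⊴`-maximal node is in `𝒯_{f,k}`, and `s`
contains no full splitting `{ρ⌢⟨ℓ⟩ : ℓ ≤ f(lg ρ)}`. -/
def SBase (f : ℕ → ℕ) (k : ℕ) (s : Set (List ℕ)) : Prop :=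
  s ⊆ Tle f k ∧ s.Nonempty ∧
  (∀ η ∈ s, ∀ ρ : List ℕ, ρ <+: η → ρ ∈ s) ∧
  (∀ ρ ∈ s, (∀ η ∈ s, ρ <+: η → η = ρ) → ρ.length = k) ∧
  (∀ ρ ∈ Tle f k, ¬ ∀ ℓ ≤ f ρ.length, ρ ++ [ℓ] ∈ s)

/-- `𝒮_{f,k}` : the `k`-maximal subsets of `𝒯_{f,[k]}`, i.e. those satisfying
`SBase` and maximal under inclusion subject to it. -/
def Sk (f : ℕ → ℕ) (k : ℕ) : Set (Set (List ℕ)) :=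
  {s | SBase f k s ∧ ∀ s', SBase f k s' → s ⊆ s' → s' = s}

/-- `𝒮_f = ⋃_{k ≥ 1} 𝒮_{f,k}`. -/
def Sf (f : ℕ → ℕ) : Set (Set (List ℕ)) := {s | ∃ k, 1 ≤ k ∧ s ∈ Sk f k}

/-- The restriction `η ↾ k = ⟨η 0, …, η (k-1)⟩` of `η : ℕ → ℕ`. -/
def restr (η : ℕ → ℕ) (k : ℕ) : List ℕ := List.map η (List.range k)

/-- `lim(𝒯_f)` : branches of `𝒯_f`. -/
def limT (f : ℕ → ℕ) : Set (ℕ → ℕ) := {η | ∀ k, restr η k ∈ Tk f k}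

/-- `lim(𝒮_f)` : sequences `⟨s_k : 1 ≤ k < ω⟩` with `s_k ∈ 𝒮_{f,k}`,
increasing under inclusion (the value at `0` is irrelevant). -/
def limS (f : ℕ → ℕ) : Set (ℕ → Set (List ℕ)) :=
  {ν | (∀ k, 1 ≤ k → ν k ∈ Sk f k) ∧ ∀ k k', 1 ≤ k → k < k' → ν k ⊆ ν k'}

/-! A `k`-maximal set omits exactly one immediate successor of each of its nodes of length `< k`: it
omits at least one because it contains no full splitting, and omitting a second one would contradict
maximality. So it is the tree of all sequences that never take the successor chosen by some function
`m`. As `f` is positive, such a tree has no dead ends, and cutting the tree of `m` at every level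
gives an element of `lim(𝒮_f)`. -/

section Sequences

variable {f : ℕ → ℕ} {k l : ℕ} {η ρ : List ℕ}

theorem inT_iff_getElem : inT f η ↔ ∀ i, ∀ h : i < η.length, η[i] ≤ f i :=
  Fin.forall_iff

theorem inT.of_prefix (hη : inT f η) (hρ : ρ <+: η) : inT f ρ := by
  rw [inT_iff_getElem] at hη ⊢
  intro i hi
  rw [hρ.getElem hi]
  exact hη i _

theorem inT_append_singleton : inT f (ρ ++ [l]) ↔ inT f ρ ∧ l ≤ f ρ.length := by
  refine ⟨fun h ↦ ⟨h.of_prefix (List.prefix_append _ _), ?_⟩, fun ⟨hρ, hl⟩ ↦ ?_⟩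
  · simpa using inT_iff_getElem.1 h ρ.length (by simp)
  · rw [inT_iff_getElem] at hρ ⊢
    intro i hi
    have hi' : i ≤ ρ.length := by simpa [Nat.lt_succ_iff] using hi
    rcases hi'.lt_or_eq with hlt | rfl
    · simpa [List.getElem_append_left hlt] using hρ i hlt
    · simpa using hl

theorem nil_mem_Tle : [] ∈ Tle f k :=
  ⟨Nat.zero_le k, fun i ↦ i.elim0⟩

theorem Tle_mono : Monotone (Tle f) :=
  fun _ _ hk _ hη ↦ ⟨hη.1.trans hk, hη.2⟩

theorem mem_Tle_of_prefix (hη : η ∈ Tle f k) (hρ : ρ <+: η) : ρ ∈ Tle f k :=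
  ⟨hρ.length_le.trans hη.1, hη.2.of_prefix hρ⟩

theorem append_singleton_mem_Tle :
    ρ ++ [l] ∈ Tle f k ↔ ρ ∈ Tle f k ∧ ρ.length < k ∧ l ≤ f ρ.length := by
  simp only [Tle, Set.mem_ofPred_eq, inT_append_singleton, List.length_append,
    List.length_singleton, Nat.succ_le_iff]
  exact ⟨fun ⟨hk, hρ, hl⟩ ↦ ⟨⟨hk.le, hρ⟩, hk, hl⟩, fun ⟨⟨_, hρ⟩, hk, hl⟩ ↦ ⟨hk, hρ, hl⟩⟩

end Sequences

/-- The tree of all sequences in `𝒯_{f,[k]}` that do not pass through `ρ⌢⟨m ρ⟩` for any `ρ`. The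
choice `m` does not depend on the height `k`, so that the trees of one `m` form a chain. -/
def avoidTree (f : ℕ → ℕ) (m : List ℕ → ℕ) (k : ℕ) : Set (List ℕ) :=
  {η ∈ Tle f k | ∀ ρ, ¬ ρ ++ [m ρ] <+: η}

section AvoidTree

variable {f : ℕ → ℕ} {m : List ℕ → ℕ} {k l : ℕ} {η ρ : List ℕ} {s : Set (List ℕ)}

theorem nil_mem_avoidTree : [] ∈ avoidTree f m k :=
  ⟨nil_mem_Tle, by simp⟩

theorem avoidTree_mono : Monotone (avoidTree f m) :=
  fun _ _ hk _ hη ↦ ⟨Tle_mono hk hη.1, hη.2⟩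

theorem mem_avoidTree_of_prefix (hη : η ∈ avoidTree f m k) (hρ : ρ <+: η) : ρ ∈ avoidTree f m k :=
  ⟨mem_Tle_of_prefix hη.1 hρ, fun σ hσ ↦ hη.2 σ (hσ.trans hρ)⟩

theorem append_choice_notMem_avoidTree : ρ ++ [m ρ] ∉ avoidTree f m k :=
  fun h ↦ h.2 ρ List.prefix_rfl

theorem append_singleton_mem_avoidTree (hρ : ρ ∈ avoidTree f m k) (hk : ρ.length < k)
    (hl : l ≤ f ρ.length) (hlm : l ≠ m ρ) : ρ ++ [l] ∈ avoidTree f m k := by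
  refine ⟨append_singleton_mem_Tle.2 ⟨hρ.1, hk, hl⟩, fun σ hσ ↦ ?_⟩
  rcases List.prefix_concat_iff.1 hσ with heq | hprefix
  · obtain ⟨rfl, hml⟩ := List.append_inj' heq rfl
    exact hlm (List.singleton_inj.1 hml).symm
  · exact hρ.2 σ hprefix

theorem length_eq_of_maximal_avoidTree (hf_pos : ∀ n, 0 < f n) (hρ : ρ ∈ avoidTree f m k)
    (hmax : ∀ η ∈ avoidTree f m k, ρ <+: η → η = ρ) : ρ.length = k := by
  by_contra hne
  obtain ⟨l, hl, hlm⟩ : ∃ l ≤ f ρ.length, l ≠ m ρ := by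
    have := hf_pos ρ.length
    exact ⟨if m ρ = 0 then 1 else 0, by split <;> omega, by split <;> omega⟩
  have hmem := append_singleton_mem_avoidTree hρ (hρ.1.1.lt_of_ne hne) hl hlm
  simpa using hmax _ hmem (List.prefix_append _ _)

theorem SBase_avoidTree (hf_pos : ∀ n, 0 < f n) (hm : ∀ ρ, m ρ ≤ f ρ.length) (k : ℕ) :
    SBase f k (avoidTree f m k) :=
  ⟨fun _ hη ↦ hη.1, ⟨[], nil_mem_avoidTree⟩, fun _ hη _ hρ ↦ mem_avoidTree_of_prefix hη hρ,
    fun _ hρ hmax ↦ length_eq_of_maximal_avoidTree hf_pos hρ hmax,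
    fun ρ _ hfull ↦ append_choice_notMem_avoidTree (hfull (m ρ) (hm ρ))⟩

theorem SBase.subset_avoidTree_of_superset (hs : SBase f k s) (hsub : avoidTree f m k ⊆ s) :
    s ⊆ avoidTree f m k := by
  obtain ⟨hTle, -, hprefix, -, hsplit⟩ := hs
  intro η
  induction η using List.reverseRecOn with
  | nil => exact fun _ ↦ nil_mem_avoidTree
  | append_singleton ρ l ih =>
    intro hρl
    have hρ : ρ ∈ avoidTree f m k := ih (hprefix _ hρl ρ (List.prefix_append _ _))
    obtain ⟨hρT, hk, hl⟩ := append_singleton_mem_Tle.1 (hTle hρl)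
    refine append_singleton_mem_avoidTree hρ hk hl fun hlm ↦ hsplit ρ hρT fun j hj ↦ ?_
    by_cases hjm : j = m ρ
    · rwa [hjm, ← hlm]
    · exact hsub (append_singleton_mem_avoidTree hρ hk hj hjm)

theorem SBase.exists_subset_avoidTree (hs : SBase f k s) :
    ∃ m : List ℕ → ℕ, (∀ ρ, m ρ ≤ f ρ.length) ∧ s ⊆ avoidTree f m k := by
  obtain ⟨hTle, -, hprefix, -, hsplit⟩ := hs
  have homitted (ρ : List ℕ) : ∃ l ≤ f ρ.length, ρ ++ [l] ∉ s := by
    by_contra! hfull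
    have hρ : ρ ∈ Tle f k := (append_singleton_mem_Tle.1 (hTle (hfull 0 (Nat.zero_le _)))).1
    exact hsplit ρ hρ hfull
  choose m hm hmem using homitted
  exact ⟨m, hm, fun η hη ↦ ⟨hTle hη, fun ρ hρ ↦ hmem ρ (hprefix η hη _ hρ)⟩⟩

theorem mem_Sk_iff_exists_avoidTree (hf_pos : ∀ n, 0 < f n) :
    s ∈ Sk f k ↔ ∃ m : List ℕ → ℕ, (∀ ρ, m ρ ≤ f ρ.length) ∧ avoidTree f m k = s := by
  constructor
  · rintro ⟨hs, hmax⟩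
    obtain ⟨m, hm, hsub⟩ := hs.exists_subset_avoidTree
    exact ⟨m, hm, hmax _ (SBase_avoidTree hf_pos hm k) hsub⟩
  · rintro ⟨m, hm, rfl⟩
    exact ⟨SBase_avoidTree hf_pos hm k,
      fun _ hs hsub ↦ (hs.subset_avoidTree_of_superset hsub).antisymm hsub⟩

theorem avoidTree_mem_limS (hf_pos : ∀ n, 0 < f n) (hm : ∀ ρ, m ρ ≤ f ρ.length) :
    avoidTree f m ∈ limS f :=
  ⟨fun _ _ ↦ (mem_Sk_iff_exists_avoidTree hf_pos).2 ⟨m, hm, rfl⟩,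
    fun _ _ _ hlt ↦ avoidTree_mono hlt.le⟩

end AvoidTree

theorem limS_through_any_general (f : ℕ → ℕ) (hf_pos : ∀ k, 0 < f k) :
    (∀ k, ∀ s ∈ Sk f k, ∃ ν ∈ limS f, ν k = s) ∧ (limS f).Nonempty := by
  refine ⟨fun k s hs ↦ ?_, avoidTree f 0, avoidTree_mem_limS hf_pos fun _ ↦ Nat.zero_le _⟩
  obtain ⟨m, hm, hms⟩ := (mem_Sk_iff_exists_avoidTree hf_pos).1 hs
  exact ⟨avoidTree f m, avoidTree_mem_limS hf_pos hm, hms⟩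

/-- For `f ∈ ℱ`, every `s ∈ 𝒮_{f,k}` (`k ≥ 1`) occurs as the `k`-th entry of
some branch of `𝒮_f`; in particular `lim(𝒮_f)` is nonempty. -/
theorem limS_through_any
    (f : ℕ → ℕ) (hf : StrictMono f) (hf0 : ∀ k, 0 < f k) :
    (∀ k, 1 ≤ k → ∀ s ∈ Sk f k, ∃ ν ∈ limS f, ν k = s) ∧
      (limS f).Nonempty := by
  have ⟨hthrough, hnonempty⟩ := limS_through_any_general f hf0
  exact ⟨fun k _ ↦ hthrough k, hnonempty⟩
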